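/- arXiv:2501.12949 — 6 statements merged into one kernel-verified Lean document; each statement's English description precedes it below -/
import Mathlib

section
/- Let d ≥ 0, let D ⊆ ℝ^{1+d} be a compact set, let a < b be real numbers and [a',b'] ⊂ (a,b) a compact subinterval, and let F : (a,b) → ℝ be infinitely differentiable. Let w₀ be a smooth real-valued function on an open neighborhood of D with w₀(D) ⊆ [a',b'], and let (δ_N)_{N≥1} be smooth real-valued functions on that neighborhood such that: (i) there are integers k ≥ 0, j ≥ 0 and a constant K > 0 with N^j·|∂^α δ_N(z)| ≤ K for all N ≥ 1, all z ∈ D and all multi-indices α with |α| ≤ k; and (ii) w_N := w₀ + δ_N takes values in [a',b'] on D for every N ≥ 1. Then for every integer l ≥ 1 there exists K' > 0 such that the remainder R_{l,N} := F∘w_N − Σ_{i=0}^{l−1} (F^{(i)}∘w₀)·δ_N^i/i! satisfies N^{jl}·|∂^α R_{l,N}(z)| ≤ K' for all N ≥ 1, all z ∈ D and all multi-indices α with |α| ≤ k. -/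
/-- The one-variable Taylor remainder. -/
noncomputable def taylRem (F : ℝ → ℝ) (l : ℕ) (x h : ℝ) : ℝ :=
  F (x + h) - ∑ i ∈ Finset.range l, iteratedDeriv i F x * h ^ i / (Nat.factorial i)

theorem contDiffOn_deriv_top {a b : ℝ} {F : ℝ → ℝ}
    (hF : ContDiffOn ℝ (⊤ : ℕ∞) F (Set.Ioo a b)) :
    ContDiffOn ℝ (⊤ : ℕ∞) (deriv F) (Set.Ioo a b) :=
  hF.deriv_of_isOpen isOpen_Ioo (by exact_mod_cast le_of_eq rfl)

theorem contDiffOn_iteratedDeriv_top {a b : ℝ} (i : ℕ) : ∀ {F : ℝ → ℝ},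
    ContDiffOn ℝ (⊤ : ℕ∞) F (Set.Ioo a b) →
    ContDiffOn ℝ (⊤ : ℕ∞) (iteratedDeriv i F) (Set.Ioo a b) := by
  induction i with
  | zero => intro F hF; simpa using hF
  | succ n ih => intro F hF; rw [iteratedDeriv_succ']; exact ih (contDiffOn_deriv_top hF)

theorem hasDerivAt_of_top {a b : ℝ} {F : ℝ → ℝ}
    (hF : ContDiffOn ℝ (⊤ : ℕ∞) F (Set.Ioo a b)) {x : ℝ} (hx : x ∈ Set.Ioo a b) :
    HasDerivAt F (deriv F x) x :=
  ((hF.contDiffAt (isOpen_Ioo.mem_nhds hx)).differentiableAt (by simp)).hasDerivAt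

theorem taylRem_succ (F : ℝ → ℝ) (l : ℕ) (x h : ℝ) :
    taylRem F (l + 1) x h = taylRem F l x h - iteratedDeriv l F x * h ^ l / (Nat.factorial l) := by
  simp only [taylRem, Finset.sum_range_succ]; ring

theorem taylRem_hasFDerivAt {E : Type*} [NormedAddCommGroup E] [NormedSpace ℝ E]
    {a b : ℝ} {F : ℝ → ℝ} (hF : ContDiffOn ℝ (⊤ : ℕ∞) F (Set.Ioo a b))
    {u v : E → ℝ} {u' v' : E →L[ℝ] ℝ} {y : E}
    (hu : HasFDerivAt u u' y) (hv : HasFDerivAt v v' y)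
    (h1 : u y ∈ Set.Ioo a b) (h2 : u y + v y ∈ Set.Ioo a b) (l : ℕ) :
    HasFDerivAt (fun y => taylRem F l (u y) (v y))
      (taylRem (deriv F) l (u y) (v y) • u' + taylRem (deriv F) (l - 1) (u y) (v y) • v') y := by
  induction l with
  | zero =>
    simp only [taylRem, Nat.zero_sub, Finset.range_zero, Finset.sum_empty, sub_zero]
    rw [← smul_add]
    exact (hasDerivAt_of_top hF h2).comp_hasFDerivAt y (hu.add hv)
  | succ l ih =>
    have hG := (hasDerivAt_of_top (contDiffOn_iteratedDeriv_top l hF) h1).comp_hasFDerivAt y hu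
    rw [← iteratedDeriv_succ, iteratedDeriv_succ'] at hG
    have hp := ((hG.mul (hv.pow l)).mul_const ((Nat.factorial l : ℝ)⁻¹))
    have := ih.sub hp
    have hfun : (fun y => taylRem F (l + 1) (u y) (v y)) = ((fun y => taylRem F l (u y) (v y)) -
        fun y => (iteratedDeriv l F ∘ u * fun x => v x ^ l) y * (Nat.factorial l : ℝ)⁻¹) := by
      funext y
      simp [taylRem_succ, div_eq_mul_inv]
    rw [hfun]
    refine this.congr_fderiv ?_
    cases l with
    | zero =>
      ext e
      simp [taylRem_succ]
      ring
    | succ m =>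
      ext e
      have hm : ((m + 1 : ℕ) : ℝ) ≠ 0 := by positivity
      have hm' : ((Nat.factorial m : ℕ) : ℝ) ≠ 0 := by positivity
      push_cast at hm
      simp [taylRem_succ, iteratedDeriv_succ', Nat.factorial_succ]
      field_simp
      ring

theorem taylRem_zero_right (F : ℝ → ℝ) (l : ℕ) (x : ℝ) : taylRem F (l + 1) x 0 = 0 := by
  induction l with
  | zero => simp [taylRem]
  | succ l ih => rw [taylRem_succ, ih]; simp

theorem taylRem_bound {a b a' b' : ℝ} (haa' : a < a') (hb'b : b' < b) (l : ℕ) :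
    ∀ {F : ℝ → ℝ}, ContDiffOn ℝ (⊤ : ℕ∞) F (Set.Ioo a b) →
    ∃ C : ℝ, ∀ x h : ℝ, x ∈ Set.Icc a' b' → x + h ∈ Set.Icc a' b' →
      |taylRem F l x h| ≤ C * |h| ^ l := by
  have hsub : Set.Icc a' b' ⊆ Set.Ioo a b := Set.Icc_subset_Ioo haa' hb'b
  induction l with
  | zero =>
    intro F hF
    obtain ⟨C, hC⟩ := (isCompact_Icc (a := a') (b := b')).exists_bound_of_continuousOn
      (hF.continuousOn.mono hsub)
    refine ⟨C, fun x h _ hx => ?_⟩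
    simpa [taylRem] using hC _ hx
  | succ l ih =>
    intro F hF
    obtain ⟨C, hC⟩ := ih (contDiffOn_deriv_top hF)
    refine ⟨|C|, fun x h hx hxh => ?_⟩
    have key : ∀ t ∈ Set.uIcc 0 h, x + t ∈ Set.Icc a' b' ∧ |t| ≤ |h| := by
      intro t ht
      rcases le_total 0 h with h0 | h0
      · rw [Set.uIcc_of_le h0] at ht
        refine ⟨⟨by linarith [ht.1, hx.1], by linarith [ht.2, hxh.2]⟩, ?_⟩
        rw [abs_of_nonneg ht.1, abs_of_nonneg h0]; exact ht.2
      · rw [Set.uIcc_of_ge h0] at ht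
        refine ⟨⟨by linarith [ht.1, hxh.1], by linarith [ht.2, hx.2]⟩, ?_⟩
        rw [abs_of_nonpos ht.2, abs_of_nonpos h0]; linarith [ht.1]
    have hd : ∀ t ∈ Set.uIcc 0 h, HasDerivWithinAt (fun t => taylRem F (l + 1) x t)
        (taylRem (deriv F) l x t) (Set.uIcc 0 h) t := by
      intro t ht
      have := taylRem_hasFDerivAt hF (hasFDerivAt_const x t) (hasFDerivAt_id t)
        (hsub hx) (hsub (key t ht).1) (l + 1)
      have := this.hasDerivAt.hasDerivWithinAt (s := Set.uIcc 0 h)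
      simpa using this
    have hb : ∀ t ∈ Set.uIcc 0 h, ‖taylRem (deriv F) l x t‖ ≤ |C| * |h| ^ l := by
      intro t ht
      refine (hC x t hx (key t ht).1).trans ?_
      have := (key t ht).2
      gcongr
      exact le_abs_self C
    have := Convex.norm_image_sub_le_of_norm_hasDerivWithin_le hd hb (convex_uIcc 0 h)
      Set.left_mem_uIcc Set.right_mem_uIcc
    rw [taylRem_zero_right] at this
    simpa [pow_succ, mul_assoc] using this

/-- `O_k(1/N^m)` for families of vector valued maps. -/
def OBd {E W : Type*} [NormedAddCommGroup E] [NormedSpace ℝ E]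
    [NormedAddCommGroup W] [NormedSpace ℝ W] (D : Set E) (G : ℕ → E → W) (m k : ℕ) : Prop :=
  ∃ C : ℝ, ∀ N : ℕ, 1 ≤ N → ∀ z ∈ D, ∀ p ≤ k, (N : ℝ) ^ m * ‖iteratedFDeriv ℝ p (G N) z‖ ≤ C

section OBdLemmas

variable {E W : Type*} [NormedAddCommGroup E] [NormedSpace ℝ E]
    [NormedAddCommGroup W] [NormedSpace ℝ W] {D : Set E}

theorem OBd.mono {G : ℕ → E → W} {m k m' k' : ℕ} (h : OBd D G m k) (hm : m' ≤ m) (hk : k' ≤ k) :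
    OBd D G m' k' := by
  obtain ⟨C, hC⟩ := h
  refine ⟨C, fun N hN z hz p hp => le_trans ?_ (hC N hN z hz p (hp.trans hk))⟩
  have : (1 : ℝ) ≤ N := by exact_mod_cast hN
  gcongr

theorem OBd.fderiv {G : ℕ → E → W} {m k : ℕ} (h : OBd D G m (k + 1)) :
    OBd D (fun N => fderiv ℝ (G N)) m k := by
  obtain ⟨C, hC⟩ := h
  refine ⟨C, fun N hN z hz p hp => ?_⟩
  rw [norm_iteratedFDeriv_fderiv]
  exact hC N hN z hz (p + 1) (by omega)

theorem OBd.add {G H : ℕ → E → W} {m k : ℕ} (hG : OBd D G m k) (hH : OBd D H m k)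
    (sG : ∀ N, 1 ≤ N → ∀ z ∈ D, ContDiffAt ℝ (⊤ : ℕ∞) (G N) z)
    (sH : ∀ N, 1 ≤ N → ∀ z ∈ D, ContDiffAt ℝ (⊤ : ℕ∞) (H N) z) :
    OBd D (fun N y => G N y + H N y) m k := by
  obtain ⟨C, hC⟩ := hG
  obtain ⟨C', hC'⟩ := hH
  refine ⟨C + C', fun N hN z hz p hp => ?_⟩
  have e := fun_iteratedFDeriv_add_apply (i := p)
    ((sG N hN z hz).of_le (by exact_mod_cast le_top)) ((sH N hN z hz).of_le (by exact_mod_cast le_top))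
  rw [e]
  have h1 := hC N hN z hz p hp
  have h2 := hC' N hN z hz p hp
  calc _ ≤ (N : ℝ) ^ m * (‖iteratedFDeriv ℝ p (G N) z‖ + ‖iteratedFDeriv ℝ p (H N) z‖) := by
        gcongr; exact norm_add_le _ _
    _ ≤ _ := by rw [mul_add]; exact add_le_add h1 h2

theorem OBd.smul {G : ℕ → E → ℝ} {H : ℕ → E → W} {m m' k : ℕ}
    (hG : OBd D G m k) (hH : OBd D H m' k) (V : ℕ → Set E)
    (hV : ∀ N, 1 ≤ N → IsOpen (V N)) (hDV : ∀ N, 1 ≤ N → D ⊆ V N)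
    (sG : ∀ N, 1 ≤ N → ContDiffOn ℝ (⊤ : ℕ∞) (G N) (V N))
    (sH : ∀ N, 1 ≤ N → ContDiffOn ℝ (⊤ : ℕ∞) (H N) (V N)) :
    OBd D (fun N y => G N y • H N y) (m + m') k := by
  obtain ⟨C, hC⟩ := hG
  obtain ⟨C', hC'⟩ := hH
  refine ⟨2 ^ k * (|C| * |C'|), fun N hN z hz p hp => ?_⟩
  have hz' := hDV N hN hz
  have e := norm_iteratedFDerivWithin_smul_le (sG N hN) (sH N hN) (hV N hN).uniqueDiffOn hz'
    (n := p) (by exact_mod_cast le_top)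
  simp only [iteratedFDerivWithin_of_isOpen _ (hV N hN) hz'] at e
  calc _ ≤ (N : ℝ) ^ (m + m') * ∑ i ∈ Finset.range (p + 1), (p.choose i : ℝ) *
          ‖iteratedFDeriv ℝ i (G N) z‖ * ‖iteratedFDeriv ℝ (p - i) (H N) z‖ := by gcongr
    _ = ∑ i ∈ Finset.range (p + 1), (p.choose i : ℝ) *
          (((N : ℝ) ^ m * ‖iteratedFDeriv ℝ i (G N) z‖) *
          ((N : ℝ) ^ m' * ‖iteratedFDeriv ℝ (p - i) (H N) z‖)) := by
        rw [Finset.mul_sum]; refine Finset.sum_congr rfl fun i _ => ?_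
        rw [pow_add]; ring
    _ ≤ ∑ i ∈ Finset.range (p + 1), (p.choose i : ℝ) * (|C| * |C'|) := by
        refine Finset.sum_le_sum fun i hi => ?_
        have hi' : i ≤ p := by simpa [Nat.lt_succ_iff] using hi
        have h1 := (hC N hN z hz i (by omega)).trans (le_abs_self C)
        have h2 := (hC' N hN z hz (p - i) (by omega)).trans (le_abs_self C')
        gcongr
    _ = 2 ^ p * (|C| * |C'|) := by
        rw [← Finset.sum_mul]; congr 1; exact_mod_cast Nat.sum_range_choose p
    _ ≤ _ := by gcongr; norm_num

theorem OBd.const {f : E → W} {U : Set E} (hU : IsOpen U) (hDU : D ⊆ U) (hD : IsCompact D)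
    (hf : ContDiffOn ℝ (⊤ : ℕ∞) f U) (k : ℕ) : OBd D (fun _ => f) 0 k := by
  have : ∀ p : ℕ, ∃ C, ∀ z ∈ D, ‖iteratedFDeriv ℝ p f z‖ ≤ C := fun p =>
    hD.exists_bound_of_continuousOn fun z hz =>
      ((hf.contDiffAt (hU.mem_nhds (hDU hz))).continuousAt_iteratedFDeriv
        (by exact_mod_cast le_top)).continuousWithinAt
  choose C hC using this
  refine ⟨∑ p ∈ Finset.range (k + 1), |C p|, fun N _ z hz p hp => ?_⟩
  rw [pow_zero, one_mul]
  refine (hC p z hz).trans ((le_abs_self _).trans ?_)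
  exact Finset.single_le_sum (f := fun p => |C p|) (fun i _ => abs_nonneg _)
    (Finset.mem_range.2 (by omega))

end OBdLemmas

theorem taylRem_contDiffOn {E : Type*} [NormedAddCommGroup E] [NormedSpace ℝ E]
    {a b : ℝ} {F : ℝ → ℝ} (hF : ContDiffOn ℝ (⊤ : ℕ∞) F (Set.Ioo a b))
    {u v : E → ℝ} {V : Set E} (hu : ContDiffOn ℝ (⊤ : ℕ∞) u V) (hv : ContDiffOn ℝ (⊤ : ℕ∞) v V)
    (h1 : ∀ y ∈ V, u y ∈ Set.Ioo a b) (h2 : ∀ y ∈ V, u y + v y ∈ Set.Ioo a b) (l : ℕ) :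
    ContDiffOn ℝ (⊤ : ℕ∞) (fun y => taylRem F l (u y) (v y)) V := by
  unfold taylRem
  refine (hF.comp (hu.add hv) h2).sub (ContDiffOn.sum fun i _ => ?_)
  exact (((contDiffOn_iteratedDeriv_top i hF).comp hu h1).mul (hv.pow i)).div_const _

theorem taylRem_OBd {E : Type*} [NormedAddCommGroup E] [NormedSpace ℝ E] {D U : Set E}
    (hD : IsCompact D) {a b a' b' : ℝ} (haa' : a < a') (hb'b : b' < b)
    (hU : IsOpen U) (hDU : D ⊆ U)
    {w₀ : E → ℝ} (hw₀ : ContDiffOn ℝ (⊤ : ℕ∞) w₀ U)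
    (hw₀D : ∀ z ∈ D, w₀ z ∈ Set.Icc a' b') {δ : ℕ → E → ℝ}
    (hδ : ∀ N : ℕ, 1 ≤ N → ContDiffOn ℝ (⊤ : ℕ∞) (δ N) U) {j : ℕ}
    (hwD : ∀ N : ℕ, 1 ≤ N → ∀ z ∈ D, w₀ z + δ N z ∈ Set.Icc a' b') (k : ℕ) :
    OBd D δ j k → ∀ (l : ℕ) {F : ℝ → ℝ}, ContDiffOn ℝ (⊤ : ℕ∞) F (Set.Ioo a b) →
    OBd D (fun N y => taylRem F l (w₀ y) (δ N y)) (j * l) k := by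
  have hsub : Set.Icc a' b' ⊆ Set.Ioo a b := Set.Icc_subset_Ioo haa' hb'b
  have base : ∀ k, OBd D δ j k → ∀ (l : ℕ) {F : ℝ → ℝ}, ContDiffOn ℝ (⊤ : ℕ∞) F (Set.Ioo a b) →
      OBd D (fun N y => taylRem F l (w₀ y) (δ N y)) (j * l) 0 := by
    rintro k ⟨K, hK⟩ l F hF
    obtain ⟨C, hC⟩ := taylRem_bound haa' hb'b l hF
    refine ⟨|C| * K ^ l, fun N hN z hz p hp => ?_⟩
    obtain rfl : p = 0 := by omega
    have h1 := hC _ _ (hw₀D z hz) (hwD N hN z hz)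
    have h2 := hK N hN z hz 0 (by omega)
    rw [norm_iteratedFDeriv_zero] at h2 ⊢
    rw [Real.norm_eq_abs] at h2 ⊢
    calc _ ≤ (N : ℝ) ^ (j * l) * (|C| * |δ N z| ^ l) := by
          gcongr
          exact h1.trans (by gcongr; exact le_abs_self C)
      _ = |C| * ((N : ℝ) ^ j * |δ N z|) ^ l := by rw [mul_pow, ← pow_mul]; ring
      _ ≤ _ := by gcongr
  induction k with
  | zero => exact fun h l F hF => base 0 h l hF
  | succ k ih =>
    intro h l F hF
    have hF' := contDiffOn_deriv_top hF
    have ih := ih (h.mono le_rfl (Nat.le_succ k))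
    set V : ℕ → Set E := fun N => (U ∩ w₀ ⁻¹' Set.Ioo a b) ∩
      (U ∩ (fun y => w₀ y + δ N y) ⁻¹' Set.Ioo a b) with hVdef
    have hV : ∀ N, 1 ≤ N → IsOpen (V N) := fun N hN =>
      (hw₀.continuousOn.isOpen_inter_preimage hU isOpen_Ioo).inter
        ((hw₀.continuousOn.add (hδ N hN).continuousOn).isOpen_inter_preimage hU isOpen_Ioo)
    have hDV : ∀ N, 1 ≤ N → D ⊆ V N := fun N hN z hz =>
      ⟨⟨hDU hz, hsub (hw₀D z hz)⟩, ⟨hDU hz, hsub (hwD N hN z hz)⟩⟩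
    have hVU : ∀ N, V N ⊆ U := fun N y hy => hy.1.1
    have sR : ∀ l N, 1 ≤ N →
        ContDiffOn ℝ (⊤ : ℕ∞) (fun y => taylRem (deriv F) l (w₀ y) (δ N y)) (V N) := fun l N hN =>
      taylRem_contDiffOn hF' (hw₀.mono (hVU N)) ((hδ N hN).mono (hVU N))
        (fun y hy => hy.1.2) (fun y hy => hy.2.2) l
    have sw : ContDiffOn ℝ (⊤ : ℕ∞) (fderiv ℝ w₀) U :=
      hw₀.fderiv_of_isOpen hU (by exact_mod_cast le_of_eq rfl)
    have sδ : ∀ N, 1 ≤ N → ContDiffOn ℝ (⊤ : ℕ∞) (fderiv ℝ (δ N)) U := fun N hN =>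
      (hδ N hN).fderiv_of_isOpen hU (by exact_mod_cast le_of_eq rfl)
    have t1 := (ih l hF').smul (OBd.const hU hDU hD sw k) V hV hDV (sR l)
      (fun N _ => sw.mono (hVU N))
    have t2 := ((ih (l - 1) hF').smul h.fderiv V hV hDV (sR (l - 1))
      (fun N hN => (sδ N hN).mono (hVU N))).mono (m' := j * l) (k' := k) (by
        cases l with
        | zero => simp
        | succ n => simp [Nat.mul_succ]) le_rfl
    obtain ⟨C, hC⟩ := OBd.add t1 t2
      (fun N hN z hz => ((sR l N hN).smul (sw.mono (hVU N))).contDiffAt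
        ((hV N hN).mem_nhds (hDV N hN hz)))
      (fun N hN z hz => ((sR (l - 1) N hN).smul ((sδ N hN).mono (hVU N))).contDiffAt
        ((hV N hN).mem_nhds (hDV N hN hz)))
    obtain ⟨C0, hC0⟩ := base _ h l hF
    refine ⟨max C C0, fun N hN z hz p hp => ?_⟩
    cases p with
    | zero => exact (hC0 N hN z hz 0 le_rfl).trans (le_max_right _ _)
    | succ p =>
      refine le_trans ?_ ((hC N hN z hz p (by omega)).trans (le_max_left _ _))
      rw [← norm_iteratedFDeriv_fderiv]
      apply le_of_eq
      congr 2
      refine Filter.EventuallyEq.eq_of_nhds (Filter.EventuallyEq.iteratedFDeriv ℝ ?_ p)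
      filter_upwards [(hV N hN).mem_nhds (hDV N hN hz)] with y hy
      have hyU := hU.mem_nhds (hVU N hy)
      exact (taylRem_hasFDerivAt hF
        ((hw₀.contDiffAt hyU).differentiableAt (by simp)).hasFDerivAt
        (((hδ N hN).contDiffAt hyU).differentiableAt (by simp)).hasFDerivAt
        hy.1.2 hy.2.2 l).fderiv

/-- Taylor expansion with remainder for orders, paper Lemma 2.3.
If `δ_N` is `O_k(1/N^j)` on the compact set `D` and `w_N = w₀ + δ_N` takes values in
`[a',b'] ⊂ (a,b)` where the smooth function `F` is defined, then for every `l ≥ 1` the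
Taylor remainder `R_{l,N} = F ∘ w_N - ∑_{i<l} (F^{(i)} ∘ w₀) δ_N^i / i!` is `O_k(1/N^{jl})`
on `D`. Bounds on all partial derivatives of multi-index `α` with `|α| ≤ k` are formalized
as bounds on the iterated (Fréchet) derivatives of order `≤ k`. -/
theorem taylor_remainder_order
    (d : ℕ) (D : Set (Fin (d + 1) → ℝ)) (hD : IsCompact D)
    (a b a' b' : ℝ) (hab : a < b) (haa' : a < a') (ha'b' : a' ≤ b') (hb'b : b' < b)
    (F : ℝ → ℝ) (hF : ContDiffOn ℝ (⊤ : ℕ∞) F (Set.Ioo a b))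
    (U : Set (Fin (d + 1) → ℝ)) (hU : IsOpen U) (hDU : D ⊆ U)
    (w₀ : (Fin (d + 1) → ℝ) → ℝ) (hw₀ : ContDiffOn ℝ (⊤ : ℕ∞) w₀ U)
    (hw₀D : ∀ z ∈ D, w₀ z ∈ Set.Icc a' b')
    (δ : ℕ → (Fin (d + 1) → ℝ) → ℝ)
    (hδ : ∀ N : ℕ, 1 ≤ N → ContDiffOn ℝ (⊤ : ℕ∞) (δ N) U)
    (k j : ℕ) (K : ℝ) (hK : 0 < K)
    (hδO : ∀ N : ℕ, 1 ≤ N → ∀ z ∈ D, ∀ p ≤ k,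
      (N : ℝ) ^ j * ‖iteratedFDeriv ℝ p (δ N) z‖ ≤ K)
    (hwD : ∀ N : ℕ, 1 ≤ N → ∀ z ∈ D, w₀ z + δ N z ∈ Set.Icc a' b') :
    ∀ l : ℕ, 1 ≤ l → ∃ K' > (0 : ℝ), ∀ N : ℕ, 1 ≤ N → ∀ z ∈ D, ∀ p ≤ k,
      (N : ℝ) ^ (j * l) *
        ‖iteratedFDeriv ℝ p
          (fun y => F (w₀ y + δ N y) -
            ∑ i ∈ Finset.range l,
              iteratedDeriv i F (w₀ y) * (δ N y) ^ i / (Nat.factorial i)) z‖ ≤ K' := by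
  intro l _
  obtain ⟨C, hC⟩ := taylRem_OBd hD haa' hb'b hU hDU hw₀ hw₀D hδ hwD k ⟨K, hδO⟩ l hF
  exact ⟨max C 1, by positivity, fun N hN z hz p hp =>
    (hC N hN z hz p hp).trans (le_max_left _ _)⟩
end

section
/- Let T > 0 and 0 < δ with 4δ < T, let X be a nonempty set, and let C > 0. For each N ≥ 1 let g_N : [δ, T−δ] × X → ℝ be a function such that for every x ∈ X the map τ ↦ g_N(τ,x) is differentiable on [δ, T−δ], and suppose that for all N ≥ 1, all τ ∈ [δ, T−δ] and all x ∈ X: |g_N(τ,x) − √τ| ≤ C/N and |∂_τ g_N(τ,x) − 1/(2√τ)| ≤ C/N. Then there exist N₀ ≥ 1 and a constant C' > 0 (depending only on C, δ and T) such that for every N ≥ N₀, every λ ∈ [2δ, T−2δ] and every x ∈ X, there is a unique φ ∈ [δ, T−δ] with g_N(φ, x) = √λ, and this φ satisfies |φ − λ| ≤ C'/N. -/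
theorem aux_sqrt_diff (T a b : ℝ) (hb : 0 ≤ b) (hab : b ≤ a) (haT : a ≤ T) :
    a - b ≤ (Real.sqrt a - Real.sqrt b) * (2 * Real.sqrt T) := by
  have h1 := Real.sqrt_le_sqrt hab
  have h2 := Real.sqrt_le_sqrt haT
  have h3 := Real.sq_sqrt hb
  have h4 := Real.sq_sqrt (hb.trans hab)
  nlinarith [mul_nonneg (sub_nonneg.2 h1) (sub_nonneg.2 h2),
    mul_nonneg (sub_nonneg.2 h1) (sub_nonneg.2 (h1.trans h2))]

/-- quantitative implicit-function statement for the level sets of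
`b/√(2N) = √τ + O(1/N)` on Perelman's N-space: if `g_N(·,x)` is differentiable on
`[δ, T-δ]` with `|g_N - √τ| ≤ C/N` and `|∂_τ g_N - 1/(2√τ)| ≤ C/N`, then for `N` large,
for every `λ ∈ [2δ, T-2δ]` and every `x` there is a unique `φ ∈ [δ, T-δ]` with
`g_N(φ,x) = √λ`, and it satisfies `|φ - λ| ≤ C'/N`. -/
theorem level_set_graph
    (T δ : ℝ) (hδ : 0 < δ) (hδT : 4 * δ < T)
    (X : Type*) [Nonempty X] (C : ℝ) (hC : 0 < C)
    (g g' : ℕ → ℝ → X → ℝ)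
    (hderiv : ∀ N : ℕ, 1 ≤ N → ∀ x : X, ∀ τ ∈ Set.Icc δ (T - δ),
      HasDerivWithinAt (fun t => g N t x) (g' N τ x) (Set.Icc δ (T - δ)) τ)
    (hg : ∀ N : ℕ, 1 ≤ N → ∀ x : X, ∀ τ ∈ Set.Icc δ (T - δ),
      |g N τ x - Real.sqrt τ| ≤ C / N)
    (hg' : ∀ N : ℕ, 1 ≤ N → ∀ x : X, ∀ τ ∈ Set.Icc δ (T - δ),
      |g' N τ x - 1 / (2 * Real.sqrt τ)| ≤ C / N) :
    ∃ N₀ : ℕ, 1 ≤ N₀ ∧ ∃ C' > (0 : ℝ), ∀ N : ℕ, N₀ ≤ N →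
      ∀ lam ∈ Set.Icc (2 * δ) (T - 2 * δ), ∀ x : X,
        (∃! φ : ℝ, φ ∈ Set.Icc δ (T - δ) ∧ g N φ x = Real.sqrt lam) ∧
        (∀ φ ∈ Set.Icc δ (T - δ), g N φ x = Real.sqrt lam → |φ - lam| ≤ C' / N) := by
  have hT : 0 < T := by linarith
  have hs : 0 < Real.sqrt T := Real.sqrt_pos.2 hT
  obtain ⟨n, hn⟩ := exists_nat_gt (2 * Real.sqrt T * C * (1 + 1 / δ))
  refine ⟨n + 1, by omega, 2 * Real.sqrt T * C, by positivity, ?_⟩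
  intro N hN lam hlam x
  have hN1 : 1 ≤ N := by omega
  have hNpos : (0 : ℝ) < N := by exact_mod_cast hN1
  have hNn : (n : ℝ) ≤ N := by exact_mod_cast (by omega : n ≤ N)
  have hA : 0 < 2 * Real.sqrt T * C := by positivity
  have hAd : 0 < 2 * Real.sqrt T * C * (1 / δ) := by positivity
  have e1 : C / N * (2 * Real.sqrt T) < 1 := by
    rw [div_mul_eq_mul_div, div_lt_one hNpos]; nlinarith
  have e2 : C / N * (2 * Real.sqrt T) < δ := by
    rw [div_mul_eq_mul_div, div_lt_iff₀ hNpos]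
    have h : 2 * Real.sqrt T * C * (1 / δ) < N := by nlinarith
    have h' := mul_lt_mul_of_pos_left h hδ
    have h'' : δ * (2 * Real.sqrt T * C * (1 / δ)) = C * (2 * Real.sqrt T) := by
      field_simp
    linarith
  obtain ⟨hl1, hl2⟩ := hlam
  have hcont : ContinuousOn (fun t => g N t x) (Set.Icc δ (T - δ)) :=
    fun τ hτ => (hderiv N hN1 x τ hτ).continuousWithinAt
  have hmono : StrictMonoOn (fun t => g N t x) (Set.Icc δ (T - δ)) := by
    apply strictMonoOn_of_deriv_pos (convex_Icc _ _) hcont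
    intro τ hτ
    rw [interior_Icc] at hτ
    have hτ' := Set.Ioo_subset_Icc_self hτ
    rw [((hderiv N hN1 x τ hτ').hasDerivAt (Icc_mem_nhds hτ.1 hτ.2)).deriv]
    have h := abs_le.1 (hg' N hN1 x τ hτ')
    have hτ0 : 0 < Real.sqrt τ := Real.sqrt_pos.2 (hδ.trans hτ.1)
    have hτs : Real.sqrt τ ≤ Real.sqrt T := Real.sqrt_le_sqrt (by linarith [hτ.2])
    have h1 : 1 / (2 * Real.sqrt T) ≤ 1 / (2 * Real.sqrt τ) := by gcongr
    have h2 : C / N < 1 / (2 * Real.sqrt T) := by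
      rw [lt_div_iff₀ (by positivity)]; exact e1
    linarith [h.1]
  constructor
  · have hle : δ ≤ T - δ := by linarith
    have hL : g N δ x ≤ Real.sqrt lam := by
      have h := abs_le.1 (hg N hN1 x δ ⟨le_rfl, hle⟩)
      have h2 := aux_sqrt_diff T lam δ hδ.le (by linarith) (by linarith)
      have h3 : C / N < Real.sqrt lam - Real.sqrt δ :=
        lt_of_mul_lt_mul_right (by linarith) (by positivity : 0 ≤ 2 * Real.sqrt T)
      linarith [h.2]
    have hR : Real.sqrt lam ≤ g N (T - δ) x := by
      have h := abs_le.1 (hg N hN1 x (T - δ) ⟨hle, le_rfl⟩)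
      have h2 := aux_sqrt_diff T (T - δ) lam (by linarith) (by linarith) (by linarith)
      have h3 : C / N < Real.sqrt (T - δ) - Real.sqrt lam :=
        lt_of_mul_lt_mul_right (by linarith) (by positivity : 0 ≤ 2 * Real.sqrt T)
      linarith [h.1]
    obtain ⟨φ, hφ, hφe⟩ := intermediate_value_Icc hle hcont ⟨hL, hR⟩
    refine ⟨φ, ⟨hφ, hφe⟩, ?_⟩
    rintro ψ ⟨hψ, hψe⟩
    exact hmono.injOn hψ hφ (hψe.trans hφe.symm)
  · intro φ hφ he
    have h := abs_le.1 (hg N hN1 x φ hφ)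
    rw [he] at h
    have hd : 2 * Real.sqrt T * C / N = C / N * (2 * Real.sqrt T) := by ring
    have hs2 : 0 ≤ 2 * Real.sqrt T := by positivity
    have hp : 0 ≤ C / N * (2 * Real.sqrt T) := by positivity
    rw [hd, abs_le]
    obtain ⟨hφ1, hφ2⟩ := hφ
    rcases le_total φ lam with hc | hc
    · have h2 := aux_sqrt_diff T lam φ (by linarith) hc (by linarith)
      have h3 := mul_le_mul_of_nonneg_right h.2 hs2
      constructor <;> linarith
    · have h2 := aux_sqrt_diff T φ lam (by linarith) hc (by linarith)
      have h3 := mul_le_mul_of_nonneg_right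
        (by linarith [h.1] : Real.sqrt φ - Real.sqrt lam ≤ C / N) hs2
      constructor <;> linarith
end

section
/- Fix an integer n ≥ 1 and for each N ≥ 1 set m = N + n + 1. Let 0 < τ₁ < T, d ≥ 0, and let D ⊆ [τ₁,T] × ℝ^d be compact, with points written (τ,x). Let f, R, q, p be smooth real-valued functions on an open neighborhood U of D with, for a constant C > 0: |∂^α f| ≤ C for |α| ≤ 3 and |∂^α R| ≤ C, |∂^α q| ≤ C, |∂^α p| ≤ C for |α| ≤ 2, all on D. Suppose moreover that the identity ∂_τ f = p − q + R − n/(2τ) holds on U. Define, for N large enough that 1 + 2τR/N ≥ 1/2 on D, G_N := e^{2f/(m−2)}·(1 + 2τR/N)^{−1}·(1 + 2τ·∂_τ f/(m−2))² + (2Nτ/(m−2)²)·e^{2f/(m−2)}·q. Then there exist N₀ ≥ 1 and K > 0 such that for all N ≥ N₀ the function E'_N := (N/2)·(G_N − 1) − (τ·(2p − q + R) + f − n) satisfies |∂^α E'_N| ≤ K/N on D for all multi-indices α with |α| ≤ 2. In other words, (N/2)(G_N − 1) = τ(2p − q + R) + f − n + O_2(1/N) on D. -/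
open Set Filter Topology

theorem aux_slice {E : Type*} [NormedAddCommGroup E] [NormedSpace ℝ E] (S : ℝ × E → ℝ)
    (e : ℝ) (w : E) (h : ContDiffAt ℝ 2 S (e, w)) (i : ℕ) (hi : i ≤ 2) :
    ‖iteratedFDeriv ℝ i (fun x => S (e, x)) w‖ ≤ ‖iteratedFDeriv ℝ i S (e, w)‖ := by
  have h' : ContDiffAt ℝ 2 (fun x => S ((e, 0) + x)) (0, w) := by
    have : ContDiffAt ℝ 2 S ((e, (0:E)) + ((0:ℝ), w)) := by simpa using h
    exact this.comp (f := fun x : ℝ × E => (e, (0:E)) + x) (0, w) (by fun_prop)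
  obtain ⟨s, hs, hws, hc⟩ := h'.contDiffOn' (m := 2) le_rfl (by simp)
  simp only [insert_eq_of_mem (mem_univ _), univ_inter] at hc
  set g := ContinuousLinearMap.inr ℝ ℝ E
  have hs' : IsOpen (g ⁻¹' s) := hs.preimage g.continuous
  have hgw : g w ∈ s := by simpa [g] using hws
  have key := g.iteratedFDerivWithin_comp_right hc hs.uniqueDiffOn hs'.uniqueDiffOn
    (x := w) hgw (i := i) (by exact_mod_cast hi)
  rw [iteratedFDerivWithin_of_isOpen i hs' (by exact hgw),
    iteratedFDerivWithin_of_isOpen i hs hgw] at key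
  have e1 : (fun x => S (e, x)) = (fun x => S ((e, 0) + x)) ∘ g := by
    ext x; simp [g]
  rw [e1, key, iteratedFDeriv_comp_add_left]
  refine (ContinuousMultilinearMap.norm_compContinuousLinearMap_le _ _).trans ?_
  have e2 : (e, (0:E)) + g w = (e, w) := by simp [g]
  rw [e2]
  refine mul_le_of_le_one_right (norm_nonneg _) ?_
  refine Finset.prod_le_one (fun _ _ => norm_nonneg _) fun _ _ => ?_
  exact ContinuousLinearMap.norm_inr_le_one ℝ ℝ E

theorem aux_bound {E : Type*} [NormedAddCommGroup E] [NormedSpace ℝ E] (S : ℝ × E → ℝ)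
    (Q : Set (ℝ × E)) (hQ : IsCompact Q) (h : ∀ z ∈ Q, ContDiffAt ℝ 2 S z) :
    ∃ K > 0, ∀ z ∈ Q, ∀ i ≤ 2, ‖iteratedFDeriv ℝ i (fun x => S (z.1, x)) z.2‖ ≤ K := by
  have hc : ∀ i : ℕ, i ≤ 2 → ∃ K, ∀ z ∈ Q, ‖iteratedFDeriv ℝ i S z‖ ≤ K := fun i hi =>
    hQ.exists_bound_of_continuousOn fun z hz =>
      ((h z hz).continuousAt_iteratedFDeriv (by exact_mod_cast hi)).continuousWithinAt
  obtain ⟨K0, h0⟩ := hc 0 (by norm_num)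
  obtain ⟨K1, h1⟩ := hc 1 (by norm_num)
  obtain ⟨K2, h2⟩ := hc 2 (by norm_num)
  refine ⟨|K0| + |K1| + |K2| + 1, by positivity, fun z hz i hi => ?_⟩
  refine (aux_slice S z.1 z.2 (h z hz) i hi).trans ?_
  have a0 := le_abs_self K0
  have a1 := le_abs_self K1
  have a2 := le_abs_self K2
  have b0 := abs_nonneg K0
  have b1 := abs_nonneg K1
  have b2 := abs_nonneg K2
  interval_cases i
  · have := h0 z hz; linarith
  · have := h1 z hz; linarith
  · have := h2 z hz; linarith

theorem aux_dslope (g : ℝ → ℝ) (hg : ∀ x, AnalyticAt ℝ g x) (x : ℝ) :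
    AnalyticAt ℝ (dslope g 0) x := by
  by_cases hx : x = 0
  · subst hx
    obtain ⟨p, hp⟩ := hg 0
    exact ⟨_, hp.has_fpower_series_dslope_fslope⟩
  · refine AnalyticAt.congr ?_ (dslope_eventuallyEq_slope_of_ne g hx).symm
    have : slope g 0 = fun y => (y - 0)⁻¹ * (g y - g 0) := by
      ext y; simp [slope]
    rw [this]
    exact ((analyticAt_id.sub analyticAt_const).inv (by simpa using hx)).mul
      ((hg x).sub analyticAt_const)

theorem aux_exp : ∃ φ : ℝ → ℝ, ContDiff ℝ 2 φ ∧ ∀ x, Real.exp x = 1 + x + x ^ 2 * φ x := by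
  have h1 := aux_dslope Real.exp (fun x => analyticAt_rexp)
  refine ⟨dslope (dslope Real.exp 0) 0, ?_, fun x => ?_⟩
  · rw [contDiff_iff_contDiffAt]
    exact fun x => (aux_dslope _ h1 x).contDiffAt
  · have e1 := sub_smul_dslope Real.exp 0 x
    have e2 := sub_smul_dslope (dslope Real.exp 0) 0 x
    rw [dslope_same] at e2
    simp at e1 e2
    linear_combination -e1 - x * e2

theorem aux_alg (ε c a f v i s q u Φ τ p R n g ex : ℝ) (hε : ε ≠ 0) (ha : a * (1 + c * ε) = 1)
    (hi : i * (1 + ε * v) = 1) (hu : u = 2 * f * a) (hs : s = 2 * τ * g * a)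
    (hv : v = 2 * τ * R) (hg : 2 * τ * g = 2 * τ * (p - q + R) - n)
    (hex : ex = 1 + ε * u + (ε * u) ^ 2 * Φ) :
    1 / (2 * ε) * ((ex * i * (1 + ε * s) ^ 2 + 2 * τ * ε * a ^ 2 * ex * q) - 1)
      - (τ * (2 * p - q + R) + f - n) =
    ε * (1 / 2 * (u ^ 2 * Φ + v ^ 2 * i + s ^ 2
      + ((u + ε * u ^ 2 * Φ) * (-v * i) + (u + ε * u ^ 2 * Φ) * (2 * s + ε * s ^ 2)
        + (-v * i) * (2 * s + ε * s ^ 2))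
      + ε * ((u + ε * u ^ 2 * Φ) * (-v * i) * (2 * s + ε * s ^ 2))
      - 2 * c * f * a - 4 * τ * g * c * a
      + 2 * τ * q * (a ^ 2 * (u + ε * u ^ 2 * Φ) - c * a * (a + 1)))) := by
  have hi1 : i = 1 + ε * (-v * i) := by linear_combination hi
  have hi2 : -v * i = -v + ε * (v ^ 2 * i) := by linear_combination (-v) * hi
  have ha1 : a = 1 - c * ε * a := by linear_combination ha
  have ha2 : a ^ 2 = 1 - c * ε * a * (a + 1) := by linear_combination (a + 1) * ha
  have hex1 : ex = 1 + ε * (u + ε * u ^ 2 * Φ) := by rw [hex]; ring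
  have hs1 : (1 + ε * s) ^ 2 = 1 + ε * (2 * s + ε * s ^ 2) := by ring
  have hu1 : u = 2 * f - 2 * c * f * a * ε := by rw [hu]; linear_combination 2 * f * ha1
  have hs2 : s = 2 * τ * g - 2 * τ * g * c * a * ε := by
    rw [hs]; linear_combination 2 * τ * g * ha1
  set e1 := u + ε * u ^ 2 * Φ with he1
  set i1 := -v * i with hi1'
  set j1 := 2 * s + ε * s ^ 2 with hj1
  have main : ex * i * (1 + ε * s) ^ 2 + 2 * τ * ε * a ^ 2 * ex * q - 1 =
      ε * (e1 + i1 + j1 + 2 * τ * q * a ^ 2)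
      + ε ^ 2 * (e1 * i1 + e1 * j1 + i1 * j1 + 2 * τ * q * a ^ 2 * e1)
      + ε ^ 3 * (e1 * i1 * j1) := by
    rw [hs1, hex1]; rw [hi1]; ring
  have lin : e1 + i1 + j1 + 2 * τ * q * a ^ 2 = 2 * (τ * (2 * p - q + R) + f - n)
     + ε * (u ^ 2 * Φ + v ^ 2 * i + s ^ 2 - 2 * c * f * a - 4 * τ * g * c * a
      - 2 * τ * q * (c * a * (a + 1))) := by
    rw [hi2, he1, hj1]
    linear_combination hu1 + 2 * hs2 + 2 * τ * q * ha2 + 2 * hg - hv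
  rw [main, lin]
  field_simp
  ring

theorem aux_smooth {X : Type*} [NormedAddCommGroup X] [NormedSpace ℝ X] (c : ℝ)
    (e t f g q u Φ v iv s a : X → ℝ) (z : X)
    (ce : ContDiffAt ℝ 2 e z) (ct : ContDiffAt ℝ 2 t z) (cf : ContDiffAt ℝ 2 f z)
    (cg : ContDiffAt ℝ 2 g z) (cq : ContDiffAt ℝ 2 q z) (cu : ContDiffAt ℝ 2 u z)
    (cΦ : ContDiffAt ℝ 2 Φ z) (cv : ContDiffAt ℝ 2 v z) (civ : ContDiffAt ℝ 2 iv z)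
    (cs : ContDiffAt ℝ 2 s z) (ca : ContDiffAt ℝ 2 a z) :
    ContDiffAt ℝ 2 (fun x =>
    1 / 2 * (u x ^ 2 * Φ x + v x ^ 2 * iv x + s x ^ 2
      + ((u x + e x * u x ^ 2 * Φ x) * (-v x * iv x)
        + (u x + e x * u x ^ 2 * Φ x) * (2 * s x + e x * s x ^ 2)
        + (-v x * iv x) * (2 * s x + e x * s x ^ 2))
      + e x * ((u x + e x * u x ^ 2 * Φ x) * (-v x * iv x) * (2 * s x + e x * s x ^ 2))
      - 2 * c * f x * a x - 4 * t x * g x * c * a x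
      + 2 * t x * q x * (a x ^ 2 * (u x + e x * u x ^ 2 * Φ x) - c * a x * (a x + 1)))) z := by
  fun_prop

/-- (the key identity `(N/2)(|∇̂b|² - 1) = τ(2Δf - |∇f|² + R) + f - n + O_2(1/N)`
on Perelman's N-space, `m = N + n + 1`, when `f` solves the backward conjugate heat equation
`∂_τ f = p - q + R - n/(2τ)` with `p = Δf`, `q = |∇f|²`). Here `∂_τ f` is formalized as
`fderiv ℝ f w (1,0)`, and bounds on all partial derivatives of multi-index `α` with
`|α| ≤ k` are formalized as bounds on iterated (Fréchet) derivatives of order `≤ k`. -/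
theorem grad_b_sq_heat_equation_expansion
    (n : ℕ) (hn : 1 ≤ n) (τ₁ T : ℝ) (hτ₁ : 0 < τ₁) (hτ₁T : τ₁ < T) (d : ℕ)
    (D : Set (ℝ × (Fin d → ℝ))) (hD : IsCompact D)
    (hDsub : D ⊆ Set.Icc τ₁ T ×ˢ (Set.univ : Set (Fin d → ℝ)))
    (U : Set (ℝ × (Fin d → ℝ))) (hU : IsOpen U) (hDU : D ⊆ U)
    (f R q p : ℝ × (Fin d → ℝ) → ℝ)
    (hf : ContDiffOn ℝ (⊤ : ℕ∞) f U) (hR : ContDiffOn ℝ (⊤ : ℕ∞) R U)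
    (hq : ContDiffOn ℝ (⊤ : ℕ∞) q U) (hp : ContDiffOn ℝ (⊤ : ℕ∞) p U)
    (C : ℝ) (hC : 0 < C)
    (hfb : ∀ z ∈ D, ∀ i ≤ 3, ‖iteratedFDeriv ℝ i f z‖ ≤ C)
    (hRb : ∀ z ∈ D, ∀ i ≤ 2, ‖iteratedFDeriv ℝ i R z‖ ≤ C)
    (hqb : ∀ z ∈ D, ∀ i ≤ 2, ‖iteratedFDeriv ℝ i q z‖ ≤ C)
    (hpb : ∀ z ∈ D, ∀ i ≤ 2, ‖iteratedFDeriv ℝ i p z‖ ≤ C)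
    (heq : ∀ z ∈ U, fderiv ℝ f z ((1, 0) : ℝ × (Fin d → ℝ)) =
      p z - q z + R z - n / (2 * z.1)) :
    ∃ N₀ : ℕ, 1 ≤ N₀ ∧ ∃ K > (0 : ℝ), ∀ N : ℕ, N₀ ≤ N →
      (∀ z ∈ D, (1 : ℝ) / 2 ≤ 1 + 2 * z.1 * R z / N) ∧
      (∀ z ∈ D, ∀ i ≤ 2,
        ‖iteratedFDeriv ℝ i
          (fun w =>
            ((N : ℝ) / 2) *
              ((Real.exp (2 * f w / ((N : ℝ) + n - 1)) * (1 + 2 * w.1 * R w / N)⁻¹ *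
                  (1 + 2 * w.1 * (fderiv ℝ f w ((1, 0) : ℝ × (Fin d → ℝ))) /
                    ((N : ℝ) + n - 1)) ^ 2
                + (2 * N * w.1 / ((N : ℝ) + n - 1) ^ 2) *
                    Real.exp (2 * f w / ((N : ℝ) + n - 1)) * q w) - 1)
            - (w.1 * (2 * p w - q w + R w) + f w - n)) z‖
          ≤ K / N) := by
  obtain ⟨φ, hφ, hexp⟩ := aux_exp
  have hT : 0 < T := hτ₁.trans hτ₁T
  have hn' : (1 : ℝ) ≤ n := by exact_mod_cast hn
  set c : ℝ := (n : ℝ) - 1 with hc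
  have hc0 : 0 ≤ c := by linarith
  set ε₀ : ℝ := 1 / (4 * T * C) with hε₀
  have hε₀pos : 0 < ε₀ := by positivity
  have hDpos : ∀ z ∈ D, 0 < z.1 := fun z hz => hτ₁.trans_le (hDsub hz).1.1
  have hhalf : ∀ ε ∈ Set.Icc 0 ε₀, ∀ z ∈ D, (1 : ℝ) / 2 ≤ 1 + ε * (2 * z.1 * R z) := by
    intro ε hε z hz
    have h1 := hRb z hz 0 (by norm_num)
    rw [norm_iteratedFDeriv_zero, Real.norm_eq_abs] at h1
    have h2 : z.1 ≤ T := (hDsub hz).1.2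
    have h3 := hDpos z hz
    have h4 : |ε * (2 * z.1 * R z)| ≤ ε₀ * (2 * T * C) := by
      rw [abs_mul, abs_mul, abs_mul, abs_of_nonneg hε.1, abs_of_pos h3, abs_two]
      have := hε.2
      gcongr
    have h5 : ε₀ * (2 * T * C) = 1 / 2 := by rw [hε₀]; field_simp; norm_num
    have h6 := neg_abs_le (ε * (2 * z.1 * R z))
    linarith
  let g : ℝ × (Fin d → ℝ) → ℝ := fun w => p w - q w + R w - n / (2 * w.1)
  let a : ℝ × (ℝ × (Fin d → ℝ)) → ℝ := fun x => (1 + c * x.1)⁻¹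
  let v : ℝ × (ℝ × (Fin d → ℝ)) → ℝ := fun x => 2 * x.2.1 * R x.2
  let iv : ℝ × (ℝ × (Fin d → ℝ)) → ℝ := fun x => (1 + x.1 * v x)⁻¹
  let u : ℝ × (ℝ × (Fin d → ℝ)) → ℝ := fun x => 2 * f x.2 * a x
  let s : ℝ × (ℝ × (Fin d → ℝ)) → ℝ := fun x => 2 * x.2.1 * g x.2 * a x
  let Φ : ℝ × (ℝ × (Fin d → ℝ)) → ℝ := fun x => φ (x.1 * u x)
  let S : ℝ × (ℝ × (Fin d → ℝ)) → ℝ := fun x =>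
    1 / 2 * (u x ^ 2 * Φ x + v x ^ 2 * iv x + s x ^ 2
      + ((u x + x.1 * u x ^ 2 * Φ x) * (-v x * iv x)
        + (u x + x.1 * u x ^ 2 * Φ x) * (2 * s x + x.1 * s x ^ 2)
        + (-v x * iv x) * (2 * s x + x.1 * s x ^ 2))
      + x.1 * ((u x + x.1 * u x ^ 2 * Φ x) * (-v x * iv x) * (2 * s x + x.1 * s x ^ 2))
      - 2 * c * f x.2 * a x - 4 * x.2.1 * g x.2 * c * a x
      + 2 * x.2.1 * q x.2 * (a x ^ 2 * (u x + x.1 * u x ^ 2 * Φ x) - c * a x * (a x + 1)))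
  have hS : ∀ x ∈ Set.Icc 0 ε₀ ×ˢ D, ContDiffAt ℝ 2 S x := by
    rintro ⟨ε, z⟩ ⟨hε, hz⟩
    have lift : ∀ h : ℝ × (Fin d → ℝ) → ℝ, ContDiffOn ℝ (⊤ : ℕ∞) h U →
        ContDiffAt ℝ 2 (fun x : ℝ × (ℝ × (Fin d → ℝ)) => h x.2) (ε, z) := by
      intro h hh
      have h1 : ContDiffAt ℝ 2 h z :=
        (hh.contDiffAt (hU.mem_nhds (hDU hz))).of_le (by norm_cast)
      exact ContDiffAt.comp (g := h) (f := Prod.snd) (ε, z) h1 contDiffAt_snd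
    have cf := lift f hf
    have cR := lift R hR
    have cq := lift q hq
    have cp := lift p hp
    have ct : ContDiffAt ℝ 2 (fun x : ℝ × (ℝ × (Fin d → ℝ)) => x.2.1) (ε, z) := by fun_prop
    have ce : ContDiffAt ℝ 2 (fun x : ℝ × (ℝ × (Fin d → ℝ)) => x.1) (ε, z) := by fun_prop
    have hz0 := hDpos z hz
    have cg : ContDiffAt ℝ 2 (fun x : ℝ × (ℝ × (Fin d → ℝ)) => g x.2) (ε, z) := by
      refine ((cp.sub cq).add cR).sub (contDiffAt_const.div (contDiffAt_const.mul ct) ?_)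
      simpa using hz0.ne'
    have ca : ContDiffAt ℝ 2 a (ε, z) := by
      refine ContDiffAt.inv (contDiffAt_const.add (contDiffAt_const.mul ce)) ?_
      have : 0 ≤ c * ε := mul_nonneg hc0 hε.1
      show 1 + c * ε ≠ 0
      positivity
    have cv : ContDiffAt ℝ 2 v (ε, z) := (contDiffAt_const.mul ct).mul cR
    have civ : ContDiffAt ℝ 2 iv (ε, z) := by
      refine ContDiffAt.inv (contDiffAt_const.add (ce.mul cv)) ?_
      have := hhalf ε hε z hz
      show 1 + ε * (2 * z.1 * R z) ≠ 0
      linarith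
    have cu : ContDiffAt ℝ 2 u (ε, z) := (contDiffAt_const.mul cf).mul ca
    have cs : ContDiffAt ℝ 2 s (ε, z) := ((contDiffAt_const.mul ct).mul cg).mul ca
    have cΦ : ContDiffAt ℝ 2 Φ (ε, z) :=
      ContDiffAt.comp (g := φ) (f := fun x => x.1 * u x) (ε, z) hφ.contDiffAt (ce.mul cu)
    exact aux_smooth c _ _ _ _ _ u Φ v iv s a (ε, z) ce ct cf cg cq cu cΦ cv civ cs ca
  obtain ⟨K, hK, hbound⟩ := aux_bound S (Set.Icc 0 ε₀ ×ˢ D) (isCompact_Icc.prod hD) hS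
  obtain ⟨M, hM⟩ := exists_nat_gt (1 / ε₀)
  refine ⟨M + 1, by omega, K, hK, fun N hN => ?_⟩
  have hN1 : 1 / ε₀ < (N : ℝ) := hM.trans (by exact_mod_cast hN)
  have hNpos : (0 : ℝ) < N := lt_trans (by positivity) hN1
  set ε : ℝ := 1 / (N : ℝ) with hεdef
  have hεpos : 0 < ε := by positivity
  have hεmem : ε ∈ Set.Icc 0 ε₀ := by
    refine ⟨hεpos.le, ?_⟩
    rw [hεdef, div_le_iff₀ hNpos]
    rw [div_lt_iff₀ hε₀pos] at hN1
    linarith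
  have hNε : (N : ℝ) = 1 / ε := by rw [hεdef]; field_simp
  refine ⟨fun z hz => ?_, fun z hz i hi => ?_⟩
  · have := hhalf ε hεmem z hz
    rw [hNε]
    convert this using 2
    field_simp
  · have hcSe : ContDiffAt ℝ 2 (fun w => S (ε, w)) z :=
      (hS (ε, z) ⟨hεmem, hz⟩).comp (f := fun w => (ε, w)) z (by fun_prop)
    have hev : (fun w =>
            ((N : ℝ) / 2) *
              ((Real.exp (2 * f w / ((N : ℝ) + n - 1)) * (1 + 2 * w.1 * R w / N)⁻¹ *
                  (1 + 2 * w.1 * (fderiv ℝ f w ((1, 0) : ℝ × (Fin d → ℝ))) /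
                    ((N : ℝ) + n - 1)) ^ 2
                + (2 * N * w.1 / ((N : ℝ) + n - 1) ^ 2) *
                    Real.exp (2 * f w / ((N : ℝ) + n - 1)) * q w) - 1)
            - (w.1 * (2 * p w - q w + R w) + f w - n)) =ᶠ[𝓝 z] fun w => ε • S (ε, w) := by
      have h1 : ∀ᶠ w in 𝓝 z, w ∈ U := hU.mem_nhds (hDU hz)
      have h2 : ∀ᶠ w : ℝ × (Fin d → ℝ) in 𝓝 z, 0 < w.1 :=
        continuous_fst.continuousAt.eventually (lt_mem_nhds (hDpos z hz))
      have h3 : ∀ᶠ w : ℝ × (Fin d → ℝ) in 𝓝 z, 0 < 1 + ε * (2 * w.1 * R w) := by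
        have hRc : ContinuousAt R z := hR.continuousOn.continuousAt (hU.mem_nhds (hDU hz))
        have : ContinuousAt (fun w : ℝ × (Fin d → ℝ) => 1 + ε * (2 * w.1 * R w)) z := by
          fun_prop
        refine this.eventually (lt_mem_nhds ?_)
        have := hhalf ε hεmem z hz
        linarith
      filter_upwards [h1, h2, h3] with w hw1 hw2 hw3
      have hcε : 0 < 1 + c * ε := by positivity
      have key := aux_alg ε c (a (ε, w)) (f w) (v (ε, w)) (iv (ε, w)) (s (ε, w)) (q w) (u (ε, w))
        (Φ (ε, w)) w.1 (p w) (R w) n (g w) (Real.exp (ε * u (ε, w))) hεpos.ne'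
        (inv_mul_cancel₀ hcε.ne') (inv_mul_cancel₀ hw3.ne') rfl rfl rfl
        (by simp only [g]; field_simp) (hexp _)
      rw [heq w hw1, smul_eq_mul]
      refine Eq.trans ?_ key
      have hden : (N : ℝ) + n - 1 = (1 + c * ε) / ε := by
        rw [hNε, hc]; field_simp; ring
      rw [hden]
      have e1 : 2 * f w / ((1 + c * ε) / ε) = ε * u (ε, w) := by
        simp only [u, a]; field_simp
      have e2 : (1 + 2 * w.1 * R w / N)⁻¹ = iv (ε, w) := by
        simp only [iv, v]; congr 2; rw [hNε]; field_simp
      have e3 : 2 * w.1 * (p w - q w + R w - n / (2 * w.1)) / ((1 + c * ε) / ε)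
          = ε * s (ε, w) := by
        simp only [s, a, g]; field_simp
      have e4 : 2 * N * w.1 / ((1 + c * ε) / ε) ^ 2 = 2 * w.1 * ε * a (ε, w) ^ 2 := by
        simp only [a]; rw [hNε]; field_simp
      have e5 : (N : ℝ) / 2 = 1 / (2 * ε) := by rw [hNε]; field_simp
      rw [e1, e2, e3, e4, e5]
    rw [(hev.iteratedFDeriv ℝ i).eq_of_nhds,
      iteratedFDeriv_const_smul_apply' (hcSe.of_le (by exact_mod_cast hi)), norm_smul,
      Real.norm_eq_abs, abs_of_pos hεpos]
    have := hbound (ε, z) ⟨hεmem, hz⟩ i hi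
    calc ε * _ ≤ ε * K := by gcongr
      _ = K / N := by rw [hεdef]; ring
end

section
/- Fix an integer n ≥ 1, an integer N ≥ 1, and set m = N + n + 1. Let 0 < λ₀ < λ and set s̄ = √(2Nλ₀) and s = √(2Nλ). Let A : [s̄, s] → ℝ be differentiable and let C, C₁ > 0 be constants with |A(w)| ≤ C and |A'(w)| ≤ C₁ for all w ∈ [s̄, s]. Then | (1/s^m)·∫_{s̄}^{s} w^{m−1}·A(w) dw − A(s)/m | ≤ (C/m)·(λ₀/λ)^{m/2} + C₁·s/(m(m+1)). -/
open intervalIntegral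

theorem wafo_aux (k : ℕ) (a s : ℝ) (ha : 0 < a) (has : a ≤ s)
    (A A' : ℝ → ℝ) (C C₁ : ℝ) (hC₁ : 0 < C₁)
    (hA : ∀ w ∈ Set.Icc a s, HasDerivWithinAt A (A' w) (Set.Icc a s) w)
    (hAb : ∀ w ∈ Set.Icc a s, |A w| ≤ C)
    (hA'b : ∀ w ∈ Set.Icc a s, |A' w| ≤ C₁) :
    |(∫ w in a..s, w ^ k * A w) - s ^ (k + 1) * (A s / ((k : ℝ) + 1))|
      ≤ C / ((k : ℝ) + 1) * a ^ (k + 1)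
        + C₁ * s / (((k : ℝ) + 1) * ((k : ℝ) + 2)) * s ^ (k + 1) := by
  have hsI : s ∈ Set.Icc a s := ⟨has, le_rfl⟩
  have hcont : ContinuousOn A (Set.uIcc a s) := by
    rw [Set.uIcc_of_le has]
    exact fun w hw => (hA w hw).continuousWithinAt
  have hlip : ∀ w ∈ Set.Icc a s, |A w - A s| ≤ C₁ * (s - w) := by
    intro w hw
    have h := (convex_Icc a s).norm_image_sub_le_of_norm_hasDerivWithin_le
      (f := A) (f' := A') (C := C₁) hA hA'b hsI hw
    rw [Real.norm_eq_abs, Real.norm_eq_abs, abs_sub_comm w s,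
      abs_of_nonneg (sub_nonneg.2 hw.2)] at h
    exact h
  have hi1 : IntervalIntegrable (fun w => w ^ k * A w) MeasureTheory.volume a s :=
    ContinuousOn.intervalIntegrable (by fun_prop)
  have hi2 : IntervalIntegrable (fun w => w ^ k * A s) MeasureTheory.volume a s :=
    ContinuousOn.intervalIntegrable (by fun_prop)
  have hsplit : (∫ w in a..s, w ^ k * (A w - A s))
      = (∫ w in a..s, w ^ k * A w) - (s ^ (k + 1) - a ^ (k + 1)) / ((k : ℝ) + 1) * A s := by
    simp_rw [mul_sub]
    rw [intervalIntegral.integral_sub hi1 hi2, intervalIntegral.integral_mul_const, integral_pow]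
  have hb : |∫ w in a..s, w ^ k * (A w - A s)| ≤ ∫ w in a..s, C₁ * (s * w ^ k - w ^ (k + 1)) := by
    rw [← Real.norm_eq_abs]
    apply intervalIntegral.norm_integral_le_of_norm_le has
    · refine Filter.Eventually.of_forall fun w hw => ?_
      have hw' : w ∈ Set.Icc a s := ⟨hw.1.le, hw.2⟩
      have hw0 : 0 ≤ w ^ k := pow_nonneg (ha.le.trans hw.1.le) k
      rw [Real.norm_eq_abs, abs_mul, abs_of_nonneg hw0]
      calc w ^ k * |A w - A s| ≤ w ^ k * (C₁ * (s - w)) :=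
            mul_le_mul_of_nonneg_left (hlip w hw') hw0
        _ = _ := by ring
    · exact Continuous.intervalIntegrable (by fun_prop) _ _
  have hcalc : (∫ w in a..s, C₁ * (s * w ^ k - w ^ (k + 1)))
      = C₁ * (s * ((s ^ (k + 1) - a ^ (k + 1)) / ((k : ℝ) + 1))
          - (s ^ (k + 2) - a ^ (k + 2)) / ((k : ℝ) + 2)) := by
    rw [intervalIntegral.integral_const_mul, intervalIntegral.integral_sub
      (Continuous.intervalIntegrable (by fun_prop) _ _)
      (Continuous.intervalIntegrable (by fun_prop) _ _),
      intervalIntegral.integral_const_mul, integral_pow, integral_pow]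
    push_cast
    ring
  have hk1 : (0 : ℝ) < (k : ℝ) + 1 := by positivity
  have hk2 : (0 : ℝ) < (k : ℝ) + 2 := by positivity
  have hap : 0 < a ^ (k + 1) := by positivity
  have hle : C₁ * (s * ((s ^ (k + 1) - a ^ (k + 1)) / ((k : ℝ) + 1))
          - (s ^ (k + 2) - a ^ (k + 2)) / ((k : ℝ) + 2))
      ≤ C₁ * s / (((k : ℝ) + 1) * ((k : ℝ) + 2)) * s ^ (k + 1) := by
    have h1 : a / ((k : ℝ) + 2) ≤ s / ((k : ℝ) + 1) := by
      apply div_le_div₀ (by linarith) has hk1 (by linarith)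
    have h2 : 0 ≤ C₁ * a ^ (k + 1) * (s / ((k : ℝ) + 1) - a / ((k : ℝ) + 2)) :=
      mul_nonneg (by positivity) (by linarith)
    have h3 : C₁ * s / (((k : ℝ) + 1) * ((k : ℝ) + 2)) * s ^ (k + 1)
      - C₁ * (s * ((s ^ (k + 1) - a ^ (k + 1)) / ((k : ℝ) + 1))
          - (s ^ (k + 2) - a ^ (k + 2)) / ((k : ℝ) + 2))
      = C₁ * a ^ (k + 1) * (s / ((k : ℝ) + 1) - a / ((k : ℝ) + 2)) := by
      field_simp
      ring
    linarith
  have hlast : |a ^ (k + 1) / ((k : ℝ) + 1) * A s| ≤ C / ((k : ℝ) + 1) * a ^ (k + 1) := by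
    rw [abs_mul, abs_of_pos (div_pos hap hk1)]
    calc _ ≤ a ^ (k + 1) / ((k : ℝ) + 1) * C :=
          mul_le_mul_of_nonneg_left (hAb s hsI) (div_pos hap hk1).le
      _ = _ := by ring
  have hdec : (∫ w in a..s, w ^ k * A w) - s ^ (k + 1) * (A s / ((k : ℝ) + 1))
      = (∫ w in a..s, w ^ k * (A w - A s)) - a ^ (k + 1) / ((k : ℝ) + 1) * A s := by
    rw [hsplit]; ring
  rw [hdec]
  have := abs_sub (∫ w in a..s, w ^ k * (A w - A s)) (a ^ (k + 1) / ((k : ℝ) + 1) * A s)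
  linarith

/-- first-order weighted-average lemma, `m = N + n + 1`,
`s̄ = √(2Nλ₀)`, `s = √(2Nλ)`:
`| s^{-m} ∫_{s̄}^{s} w^{m-1} A(w) dw - A(s)/m | ≤ (C/m)(λ₀/λ)^{m/2} + C₁ s/(m(m+1))`. -/
theorem weighted_average_first_order
    (n N : ℕ) (hn : 1 ≤ n) (hN : 1 ≤ N)
    (lam₀ lam : ℝ) (hlam₀ : 0 < lam₀) (hlam : lam₀ < lam)
    (A A' : ℝ → ℝ) (C C₁ : ℝ) (hC : 0 < C) (hC₁ : 0 < C₁)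
    (hA : ∀ w ∈ Set.Icc (Real.sqrt (2 * N * lam₀)) (Real.sqrt (2 * N * lam)),
      HasDerivWithinAt A (A' w)
        (Set.Icc (Real.sqrt (2 * N * lam₀)) (Real.sqrt (2 * N * lam))) w)
    (hAb : ∀ w ∈ Set.Icc (Real.sqrt (2 * N * lam₀)) (Real.sqrt (2 * N * lam)),
      |A w| ≤ C)
    (hA'b : ∀ w ∈ Set.Icc (Real.sqrt (2 * N * lam₀)) (Real.sqrt (2 * N * lam)),
      |A' w| ≤ C₁) :
    |(Real.sqrt (2 * N * lam) ^ (N + n + 1))⁻¹ *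
        (∫ w in (Real.sqrt (2 * N * lam₀))..(Real.sqrt (2 * N * lam)),
          w ^ (N + n) * A w)
      - A (Real.sqrt (2 * N * lam)) / ((N : ℝ) + n + 1)|
    ≤ (C / ((N : ℝ) + n + 1)) * (lam₀ / lam) ^ (((N : ℝ) + n + 1) / 2)
      + C₁ * Real.sqrt (2 * N * lam) / (((N : ℝ) + n + 1) * ((N : ℝ) + n + 2)) := by
  have hN' : (0 : ℝ) < N := by exact_mod_cast hN
  have hl : 0 < lam := hlam₀.trans hlam
  have ha : 0 < Real.sqrt (2 * N * lam₀) := Real.sqrt_pos.2 (by positivity)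
  have hs : 0 < Real.sqrt (2 * N * lam) := Real.sqrt_pos.2 (by positivity)
  have has : Real.sqrt (2 * N * lam₀) ≤ Real.sqrt (2 * N * lam) :=
    Real.sqrt_le_sqrt (by gcongr)
  have h := wafo_aux (N + n) _ _ ha has A A' C C₁ hC₁ hA hAb hA'b
  have hr : (lam₀ / lam) ^ (((N : ℝ) + n + 1) / 2)
      = Real.sqrt (2 * N * lam₀) ^ (N + n + 1) / Real.sqrt (2 * N * lam) ^ (N + n + 1) := by
    rw [← div_pow, ← Real.sqrt_div (by positivity), mul_div_mul_left _ _ (by positivity),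
      Real.sqrt_eq_rpow, ← Real.rpow_natCast, ← Real.rpow_mul (by positivity)]
    congr 1
    push_cast
    ring
  rw [hr]
  push_cast at h
  generalize Real.sqrt (2 * N * lam₀) = a at *
  generalize Real.sqrt (2 * N * lam) = s at *
  have hp : 0 < s ^ (N + n + 1) := by positivity
  generalize (∫ w in a..s, w ^ (N + n) * A w) = I at *
  have e : (s ^ (N + n + 1))⁻¹ * I - A s / ((N : ℝ) + n + 1)
      = (I - s ^ (N + n + 1) * (A s / ((N : ℝ) + n + 1))) / s ^ (N + n + 1) := by
    field_simp
  rw [e, abs_div, abs_of_pos hp, div_le_iff₀ hp]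
  refine h.trans (le_of_eq ?_)
  rw [add_mul (C / _ * _), mul_assoc (C / _), div_mul_cancel₀ _ hp.ne']
end

section
/- Fix an integer n ≥ 1, an integer N ≥ 1, and set m = N + n + 1. Let 0 < λ₀ < λ and set s̄ = √(2Nλ₀) and s = √(2Nλ). Let A : [s̄, s] → ℝ be twice differentiable and let C, C₁, C₂ > 0 be constants with |A(w)| ≤ C, |A'(w)| ≤ C₁ and |A''(w)| ≤ C₂ for all w ∈ [s̄, s]. Then | (1/s^m)·∫_{s̄}^{s} w^{m−1}·A(w) dw − A(s)/m + s·A'(s)/(m(m+1)) | ≤ (C/m + C₁·s)·(λ₀/λ)^{m/2} + C₂·s²/(m(m+1)(m+2)). -/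
open intervalIntegral

theorem wavg_aux (k : ℕ) (a s : ℝ) (ha : 0 < a) (has : a < s)
    (A A' A'' : ℝ → ℝ) (C C₁ C₂ : ℝ) (hC₁ : 0 < C₁) (hC₂ : 0 < C₂)
    (hA : ∀ w ∈ Set.Icc a s, HasDerivWithinAt A (A' w) (Set.Icc a s) w)
    (hA' : ∀ w ∈ Set.Icc a s, HasDerivWithinAt A' (A'' w) (Set.Icc a s) w)
    (hAb : ∀ w ∈ Set.Icc a s, |A w| ≤ C)
    (hA'b : ∀ w ∈ Set.Icc a s, |A' w| ≤ C₁)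
    (hA''b : ∀ w ∈ Set.Icc a s, |A'' w| ≤ C₂) :
    |(s ^ (k + 1))⁻¹ * (∫ w in a..s, w ^ k * A w) - A s / ((k : ℝ) + 1)
      + s * A' s / (((k : ℝ) + 1) * ((k : ℝ) + 2))|
    ≤ (C / ((k : ℝ) + 1) + C₁ * s) * (a / s) ^ (k + 1)
      + C₂ * s ^ 2 / (((k : ℝ) + 1) * ((k : ℝ) + 2) * ((k : ℝ) + 3)) := by
  have hs : 0 < s := ha.trans has
  have hAc : ContinuousOn A (Set.Icc a s) := fun w hw => (hA w hw).continuousWithinAt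
  have hA'c : ContinuousOn A' (Set.Icc a s) := fun w hw => (hA' w hw).continuousWithinAt
  obtain ⟨g, hg, hgA⟩ : ∃ g : ℝ → ℝ, Continuous g ∧ ∀ w ∈ Set.Icc a s, g w = A w := by
    refine ⟨Set.IccExtend has.le ((Set.Icc a s).domRestrict A), ?_, ?_⟩
    · exact (continuousOn_iff_continuous_domRestrict.1 hAc).Icc_extend'
    · intro w hw
      rw [Set.IccExtend_of_mem _ _ hw]; rfl
  have hint : (∫ w in a..s, w ^ k * A w) = ∫ w in a..s, w ^ k * g w := by
    apply intervalIntegral.integral_congr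
    intro w hw
    rw [Set.uIcc_of_le has.le] at hw
    simp only [hgA w hw]
  rw [hint]
  have hk1 : (0 : ℝ) < (k : ℝ) + 1 := by positivity
  have hk2 : (0 : ℝ) < (k : ℝ) + 2 := by positivity
  have hk3 : (0 : ℝ) < (k : ℝ) + 3 := by positivity
  set F : ℝ → ℝ := fun x => (∫ w in a..x, w ^ k * g w) - x ^ (k + 1) * A x / ((k : ℝ) + 1)
    + x ^ (k + 2) * A' x / (((k : ℝ) + 1) * ((k : ℝ) + 2)) with hF
  have hI : ∀ x, HasDerivAt (fun x => ∫ w in a..x, w ^ k * g w) (x ^ k * g x) x := fun x =>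
    ((by fun_prop : Continuous fun w : ℝ => w ^ k * g w).integral_hasStrictDerivAt a x).hasDerivAt
  have hFd : ∀ x ∈ Set.Icc a s, HasDerivWithinAt F
      (x ^ (k + 2) * A'' x / (((k : ℝ) + 1) * ((k : ℝ) + 2))) (Set.Icc a s) x := by
    intro x hx
    have h1 := (hI x).hasDerivWithinAt (s := Set.Icc a s)
    have h2 := (((hasDerivAt_pow (k + 1) x).hasDerivWithinAt (s := Set.Icc a s)).mul
      (hA x hx)).div_const ((k : ℝ) + 1)
    have h3 := (((hasDerivAt_pow (k + 2) x).hasDerivWithinAt (s := Set.Icc a s)).mul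
      (hA' x hx)).div_const (((k : ℝ) + 1) * ((k : ℝ) + 2))
    refine ((h1.sub h2).add h3).congr_deriv ?_
    rw [hgA x hx]
    simp only [Nat.add_sub_cancel, show k + 2 - 1 = k + 1 by omega]
    push_cast
    field_simp
    ring
  have hFc : ContinuousOn F (Set.Icc a s) := fun w hw => (hFd w hw).continuousWithinAt
  set D := ((k : ℝ) + 1) * ((k : ℝ) + 2) * ((k : ℝ) + 3) with hD
  have hDpos : 0 < D := by positivity
  have hB : ∀ x, HasDerivAt (fun x : ℝ => |F a| + C₂ * (x ^ (k + 3) - a ^ (k + 3)) / D)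
      (C₂ * x ^ (k + 2) / (((k : ℝ) + 1) * ((k : ℝ) + 2))) x := by
    intro x
    have := ((((hasDerivAt_pow (k + 3) x).sub_const (a ^ (k + 3))).const_mul C₂).div_const
      D).const_add |F a|
    refine this.congr_deriv ?_
    simp only [hD, show k + 3 - 1 = k + 2 by omega]
    push_cast
    field_simp
  have key := image_norm_le_of_norm_deriv_right_le_deriv_boundary hFc
    (f' := fun x => x ^ (k + 2) * A'' x / (((k : ℝ) + 1) * ((k : ℝ) + 2)))
    (fun x hx => ((hFd x ⟨hx.1, hx.2.le⟩).mono_of_mem_nhdsWithin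
      (Icc_mem_nhdsGE_of_mem hx)))
    (by simp) hB
    (by
      intro x hx
      have hx0 : 0 < x := ha.trans_le hx.1
      rw [Real.norm_eq_abs, abs_div, abs_mul, abs_of_pos (by positivity : 0 < x ^ (k + 2)),
        abs_of_pos (by positivity : (0:ℝ) < ((k : ℝ) + 1) * ((k : ℝ) + 2)), mul_comm C₂]
      gcongr
      exact hA''b x ⟨hx.1, hx.2.le⟩) (Set.right_mem_Icc.2 has.le)
  have haI := Set.left_mem_Icc.2 has.le
  have hFa : |F a| ≤ a ^ (k + 1) * (C / ((k : ℝ) + 1) + C₁ * s) := by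
    have e : F a = a ^ (k + 1) * (-(A a / ((k : ℝ) + 1)) +
        a * A' a / (((k : ℝ) + 1) * ((k : ℝ) + 2))) := by
      simp only [hF, intervalIntegral.integral_same]
      ring
    rw [e, abs_mul, abs_of_pos (by positivity : 0 < a ^ (k + 1))]
    gcongr
    refine (abs_add_le _ _).trans ?_
    rw [abs_neg, abs_div, abs_of_pos hk1, abs_div, abs_mul, abs_of_pos ha,
      abs_of_pos (by positivity : (0:ℝ) < ((k : ℝ) + 1) * ((k : ℝ) + 2))]
    gcongr
    · exact hAb a haI
    · have : (1 : ℝ) ≤ ((k : ℝ) + 1) * ((k : ℝ) + 2) := by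
        have : (0 : ℝ) ≤ k := by positivity
        nlinarith
      refine (div_le_self (by positivity) this).trans ?_
      rw [mul_comm C₁]
      exact mul_le_mul has.le (hA'b a haI) (abs_nonneg _) hs.le
  have hFs : (s ^ (k + 1))⁻¹ * (∫ w in a..s, w ^ k * g w) - A s / ((k : ℝ) + 1)
      + s * A' s / (((k : ℝ) + 1) * ((k : ℝ) + 2)) = F s / s ^ (k + 1) := by
    simp only [hF]
    field_simp
    ring
  rw [hFs, abs_div, abs_of_pos (by positivity : 0 < s ^ (k + 1)), div_le_iff₀ (by positivity)]
  have hak : 0 < C₂ * a ^ (k + 3) / D := by positivity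
  have e2 : ((C / ((k : ℝ) + 1) + C₁ * s) * (a / s) ^ (k + 1) + C₂ * s ^ 2 / D) * s ^ (k + 1)
      = a ^ (k + 1) * (C / ((k : ℝ) + 1) + C₁ * s) + C₂ * s ^ (k + 3) / D := by
    rw [div_pow]
    field_simp
    ring
  rw [e2]
  rw [Real.norm_eq_abs] at key
  have e3 : C₂ * (s ^ (k + 3) - a ^ (k + 3)) / D = C₂ * s ^ (k + 3) / D - C₂ * a ^ (k + 3) / D := by
    ring
  simp only [e3] at key
  linarith

/-- second-order weighted-average lemma, `m = N + n + 1`,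
`s̄ = √(2Nλ₀)`, `s = √(2Nλ)`:
`| s^{-m} ∫_{s̄}^{s} w^{m-1} A(w) dw - A(s)/m + s A'(s)/(m(m+1)) |
  ≤ (C/m + C₁ s)(λ₀/λ)^{m/2} + C₂ s²/(m(m+1)(m+2))`. -/
theorem weighted_average_second_order
    (n N : ℕ) (hn : 1 ≤ n) (hN : 1 ≤ N)
    (lam₀ lam : ℝ) (hlam₀ : 0 < lam₀) (hlam : lam₀ < lam)
    (A A' A'' : ℝ → ℝ) (C C₁ C₂ : ℝ) (hC : 0 < C) (hC₁ : 0 < C₁) (hC₂ : 0 < C₂)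
    (hA : ∀ w ∈ Set.Icc (Real.sqrt (2 * N * lam₀)) (Real.sqrt (2 * N * lam)),
      HasDerivWithinAt A (A' w)
        (Set.Icc (Real.sqrt (2 * N * lam₀)) (Real.sqrt (2 * N * lam))) w)
    (hA' : ∀ w ∈ Set.Icc (Real.sqrt (2 * N * lam₀)) (Real.sqrt (2 * N * lam)),
      HasDerivWithinAt A' (A'' w)
        (Set.Icc (Real.sqrt (2 * N * lam₀)) (Real.sqrt (2 * N * lam))) w)
    (hAb : ∀ w ∈ Set.Icc (Real.sqrt (2 * N * lam₀)) (Real.sqrt (2 * N * lam)),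
      |A w| ≤ C)
    (hA'b : ∀ w ∈ Set.Icc (Real.sqrt (2 * N * lam₀)) (Real.sqrt (2 * N * lam)),
      |A' w| ≤ C₁)
    (hA''b : ∀ w ∈ Set.Icc (Real.sqrt (2 * N * lam₀)) (Real.sqrt (2 * N * lam)),
      |A'' w| ≤ C₂) :
    |(Real.sqrt (2 * N * lam) ^ (N + n + 1))⁻¹ *
        (∫ w in (Real.sqrt (2 * N * lam₀))..(Real.sqrt (2 * N * lam)),
          w ^ (N + n) * A w)
      - A (Real.sqrt (2 * N * lam)) / ((N : ℝ) + n + 1)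
      + Real.sqrt (2 * N * lam) * A' (Real.sqrt (2 * N * lam)) /
          (((N : ℝ) + n + 1) * ((N : ℝ) + n + 2))|
    ≤ (C / ((N : ℝ) + n + 1) + C₁ * Real.sqrt (2 * N * lam)) *
        (lam₀ / lam) ^ (((N : ℝ) + n + 1) / 2)
      + C₂ * Real.sqrt (2 * N * lam) ^ 2 /
          (((N : ℝ) + n + 1) * ((N : ℝ) + n + 2) * ((N : ℝ) + n + 3)) := by
  have hN0 : (0 : ℝ) < N := by exact_mod_cast hN
  have hl : 0 < lam := hlam₀.trans hlam
  have h := wavg_aux (N + n) _ _ (Real.sqrt_pos.2 (by positivity : 0 < 2 * N * lam₀))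
    (Real.sqrt_lt_sqrt (by positivity) (by gcongr)) A A' A'' C C₁ C₂ hC₁ hC₂ hA hA' hAb hA'b hA''b
  have e : (lam₀ / lam) ^ (((N : ℝ) + n + 1) / 2)
      = (Real.sqrt (2 * N * lam₀) / Real.sqrt (2 * N * lam)) ^ (N + n + 1) := by
    rw [← Real.sqrt_div (by positivity), mul_div_mul_left _ _ (by positivity),
      Real.sqrt_eq_rpow, ← Real.rpow_natCast, ← Real.rpow_mul (by positivity)]
    congr 1
    push_cast
    ring
  rw [e]
  push_cast at h
  exact h
end

section
/- Fix an integer n ≥ 1, an integer N ≥ 1, and set m = N + n + 1. Let 0 < λ₀ < λ, set s̄ = √(2Nλ₀) and s = √(2Nλ), and let φ : [0, s̄] → ℝ be an integrable function with |φ(r)| ≤ C for all r ∈ [0, s̄], where C > 0. Then: (i) | s^{−m}·∫_{0}^{s̄} r^{N}·φ(r) dr | ≤ C·(λ₀/λ)^{(N+1)/2}·(2Nλ)^{−n/2}/(N+1). (ii) Consequently, for any fixed 0 < λ₀ < λ₁ ≤ T there exist constants K > 0 and c > 0 such that for all N ≥ 1 and all λ with λ₁ ≤ λ ≤ T, | s^{−m}·∫_{0}^{s̄}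 r^{N}·φ(r) dr | ≤ K·e^{−cN}, and moreover the λ-derivative of the function λ ↦ (2Nλ)^{−m/2}·∫_{0}^{s̄} r^{N}·φ(r) dr is also bounded by K'·e^{−cN} on [λ₁, T] for some K' > 0. -/
open intervalIntegral

theorem aux_sqrt_pow (x : ℝ) (hx : 0 < x) (k : ℕ) : Real.sqrt x ^ k = x ^ ((k : ℝ) / 2) := by
  rw [Real.sqrt_eq_rpow, ← Real.rpow_natCast, ← Real.rpow_mul hx.le]
  congr 1; ring

theorem aux_int (C : ℝ) (φ : ℝ → ℝ) (hbd : ∀ r : ℝ, 0 ≤ r → |φ r| ≤ C) (N : ℕ) (b : ℝ)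
    (hb : 0 ≤ b) : |∫ r in (0 : ℝ)..b, r ^ N * φ r| ≤ C * b ^ (N + 1) / ((N : ℝ) + 1) := by
  have h := intervalIntegral.norm_integral_le_of_norm_le (μ := MeasureTheory.volume)
    (f := fun r => r ^ N * φ r) (g := fun r : ℝ => C * r ^ N) (a := 0) (b := b) hb
    (Filter.Eventually.of_forall (fun r hr => by
      have h0 : 0 ≤ r := hr.1.le
      rw [Real.norm_eq_abs, abs_mul, abs_of_nonneg (pow_nonneg h0 N), mul_comm]
      exact mul_le_mul_of_nonneg_right (hbd r h0) (pow_nonneg h0 N)))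
    (Continuous.intervalIntegrable (by fun_prop) _ _)
  rw [intervalIntegral.integral_const_mul, integral_pow, Real.norm_eq_abs] at h
  refine h.trans (le_of_eq ?_)
  simp; ring

theorem aux_one (n : ℕ) (C : ℝ) (lam₀ : ℝ) (hlam₀ : 0 < lam₀) (φ : ℝ → ℝ)
    (hbd : ∀ r : ℝ, 0 ≤ r → |φ r| ≤ C) (N : ℕ) (hN : 1 ≤ N) (lam : ℝ) (hl : lam₀ < lam) :
      |(Real.sqrt (2 * N * lam) ^ (N + n + 1))⁻¹ *
          (∫ r in (0 : ℝ)..(Real.sqrt (2 * N * lam₀)), r ^ N * φ r)|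
        ≤ C * (lam₀ / lam) ^ (((N : ℝ) + 1) / 2) * (2 * N * lam) ^ (-(n : ℝ) / 2) /
            ((N : ℝ) + 1) := by
  have hN0 : (0 : ℝ) < N := by exact_mod_cast hN
  have hlam : 0 < lam := hlam₀.trans hl
  have ha : 0 < 2 * N * lam₀ := by positivity
  have hb : 0 < 2 * N * lam := by positivity
  have e1 : lam₀ / lam = (2 * N * lam₀) / (2 * N * lam) := by field_simp
  have e2 : (((N : ℝ) + 1) / 2) = ((N + 1 : ℕ) : ℝ) / 2 := by push_cast; rfl
  have e3 : (2 * N * lam) ^ (-(n : ℝ) / 2) = (Real.sqrt (2 * N * lam) ^ n)⁻¹ := by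
    rw [aux_sqrt_pow _ hb, ← Real.rpow_neg hb.le]; congr 1; ring
  rw [e1, Real.div_rpow ha.le hb.le, e2, ← aux_sqrt_pow _ ha, ← aux_sqrt_pow _ hb, e3]
  have hs : 0 < Real.sqrt (2 * N * lam) := Real.sqrt_pos.mpr hb
  rw [abs_mul, abs_of_pos (by positivity)]
  refine (mul_le_mul_of_nonneg_left (aux_int C φ hbd N _ (Real.sqrt_nonneg _))
    (by positivity)).trans (le_of_eq ?_)
  generalize Real.sqrt (2 * N * lam) = x at *
  generalize Real.sqrt (2 * N * lam₀) = y at *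
  field_simp
  ring

theorem aux_two (n : ℕ) (C : ℝ) (hC : 0 < C) (lam₀ : ℝ) (hlam₀ : 0 < lam₀) (lam₁ : ℝ)
    (h1 : lam₀ < lam₁) (N : ℕ) (hN : 1 ≤ N) (lam : ℝ) (hl : lam₁ ≤ lam) :
    C * (lam₀ / lam) ^ (((N : ℝ) + 1) / 2) * (2 * N * lam) ^ (-(n : ℝ) / 2) / ((N : ℝ) + 1)
      ≤ C * (2 * lam₁) ^ (-(n : ℝ) / 2) * Real.exp (-(-Real.log (lam₀ / lam₁) / 2) * N) /
        ((N : ℝ) + 1) := by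
  have hN1 : (1 : ℝ) ≤ N := by exact_mod_cast hN
  have hlam₁ : 0 < lam₁ := hlam₀.trans h1
  have hlam : 0 < lam := hlam₁.trans_le hl
  have hq : 0 < lam₀ / lam₁ := by positivity
  have hq1 : lam₀ / lam₁ ≤ 1 := by rw [div_le_one hlam₁]; exact h1.le
  have hexp : Real.exp (-(-Real.log (lam₀ / lam₁) / 2) * N) = (lam₀ / lam₁) ^ ((N : ℝ) / 2) := by
    rw [Real.rpow_def_of_pos hq]; congr 1; ring
  have A : (lam₀ / lam) ^ (((N : ℝ) + 1) / 2) ≤ (lam₀ / lam₁) ^ ((N : ℝ) / 2) :=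
    (Real.rpow_le_rpow (by positivity) (by gcongr) (by positivity)).trans
      (Real.rpow_le_rpow_of_exponent_ge hq hq1 (by linarith))
  have B : (2 * N * lam) ^ (-(n : ℝ) / 2) ≤ (2 * lam₁) ^ (-(n : ℝ) / 2) := by
    apply Real.rpow_le_rpow_of_nonpos (by positivity) (by nlinarith)
    have : (0 : ℝ) ≤ n := by positivity
    linarith
  rw [hexp, mul_right_comm]
  gcongr

/-- exponential smallness of the inner-region contribution, `m = N + n + 1`,
`s̄ = √(2Nλ₀)`, `s = √(2Nλ)`:
(i) `|s^{-m} ∫_0^{s̄} r^N φ(r) dr| ≤ C (λ₀/λ)^{(N+1)/2} (2Nλ)^{-n/2} / (N+1)`;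
(ii) consequently, for fixed `λ₀ < λ₁ ≤ T` this quantity, and the `λ`-derivative of
`λ ↦ (2Nλ)^{-m/2} ∫_0^{s̄} r^N φ(r) dr`, are bounded by `K e^{-cN}` uniformly for
`λ ∈ [λ₁, T]`. -/
theorem inner_region_exponentially_small
    (n : ℕ) (hn : 1 ≤ n) (C : ℝ) (hC : 0 < C)
    (lam₀ : ℝ) (hlam₀ : 0 < lam₀)
    (φ : ℝ → ℝ)
    (hint : ∀ b : ℝ, 0 ≤ b → IntervalIntegrable φ MeasureTheory.volume 0 b)
    (hbd : ∀ r : ℝ, 0 ≤ r → |φ r| ≤ C) :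
    (∀ N : ℕ, 1 ≤ N → ∀ lam : ℝ, lam₀ < lam →
      |(Real.sqrt (2 * N * lam) ^ (N + n + 1))⁻¹ *
          (∫ r in (0 : ℝ)..(Real.sqrt (2 * N * lam₀)), r ^ N * φ r)|
        ≤ C * (lam₀ / lam) ^ (((N : ℝ) + 1) / 2) * (2 * N * lam) ^ (-(n : ℝ) / 2) /
            ((N : ℝ) + 1)) ∧
    (∀ lam₁ T : ℝ, lam₀ < lam₁ → lam₁ ≤ T →
      ∃ K > (0 : ℝ), ∃ c > (0 : ℝ),
        (∀ N : ℕ, 1 ≤ N → ∀ lam : ℝ, lam₁ ≤ lam → lam ≤ T →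
          |(Real.sqrt (2 * N * lam) ^ (N + n + 1))⁻¹ *
              (∫ r in (0 : ℝ)..(Real.sqrt (2 * N * lam₀)), r ^ N * φ r)|
            ≤ K * Real.exp (-c * N)) ∧
        (∃ K' > (0 : ℝ), ∀ N : ℕ, 1 ≤ N → ∀ lam : ℝ, lam₁ ≤ lam → lam ≤ T →
          |deriv (fun l : ℝ =>
              (2 * N * l) ^ (-((N : ℝ) + n + 1) / 2) *
                (∫ r in (0 : ℝ)..(Real.sqrt (2 * N * lam₀)), r ^ N * φ r)) lam|
            ≤ K' * Real.exp (-c * N))) := by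
  refine ⟨fun N hN lam hl => aux_one n C lam₀ hlam₀ φ hbd N hN lam hl, ?_⟩
  intro lam₁ T h1 hT
  have hlam₁ : 0 < lam₁ := hlam₀.trans h1
  have hK : 0 < C * (2 * lam₁) ^ (-(n : ℝ) / 2) := by positivity
  refine ⟨C * (2 * lam₁) ^ (-(n : ℝ) / 2), hK, -Real.log (lam₀ / lam₁) / 2, ?_, ?_,
    C * (2 * lam₁) ^ (-(n : ℝ) / 2) * (((n : ℝ) + 1) / (2 * lam₁)), by positivity, ?_⟩
  · have := Real.log_neg (div_pos hlam₀ hlam₁) ((div_lt_one hlam₁).mpr h1)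
    linarith
  · intro N hN lam hl _
    refine ((aux_one n C lam₀ hlam₀ φ hbd N hN lam (h1.trans_le hl)).trans
      (aux_two n C hC lam₀ hlam₀ lam₁ h1 N hN lam hl)).trans ?_
    apply div_le_self (by positivity)
    have : (0 : ℝ) ≤ N := by positivity
    linarith
  · intro N hN lam hl _
    have hb0 := (aux_one n C lam₀ hlam₀ φ hbd N hN lam (h1.trans_le hl)).trans
      (aux_two n C hC lam₀ hlam₀ lam₁ h1 N hN lam hl)
    have hN0 : (0 : ℝ) < N := by exact_mod_cast hN
    have hlam : 0 < lam := hlam₁.trans_le hl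
    have hb : 0 < 2 * N * lam := by positivity
    generalize (∫ r in (0 : ℝ)..(Real.sqrt (2 * N * lam₀)), r ^ N * φ r) = I at *
    generalize Real.exp (-(-Real.log (lam₀ / lam₁) / 2) * N) = E at *
    generalize C * (2 * lam₁) ^ (-(n : ℝ) / 2) = K at *
    have e3 : (Real.sqrt (2 * N * lam) ^ (N + n + 1))⁻¹
        = (2 * N * lam) ^ (-((N : ℝ) + n + 1) / 2) := by
      rw [aux_sqrt_pow _ hb, ← Real.rpow_neg hb.le]; congr 1; push_cast; ring
    rw [e3] at hb0
    have hd : HasDerivAt (fun l : ℝ => (2 * N * l) ^ (-((N : ℝ) + n + 1) / 2) * I)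
        (-(((N : ℝ) + n + 1) / (2 * lam)) *
          ((2 * N * lam) ^ (-((N : ℝ) + n + 1) / 2) * I)) lam := by
      have h0 : HasDerivAt (fun l : ℝ => 2 * N * l) (2 * N) lam := by
        simpa using (hasDerivAt_id lam).const_mul (2 * (N : ℝ))
      have h2 := (h0.rpow_const (p := -((N : ℝ) + n + 1) / 2) (Or.inl hb.ne')).mul_const I
      refine h2.congr_deriv ?_
      rw [Real.rpow_sub_one hb.ne']
      field_simp
    rw [hd.deriv, abs_mul, abs_neg, abs_of_pos (by positivity)]
    have hKE : 0 ≤ K * E := by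
      have h5 := (abs_nonneg _).trans hb0
      have h6 : (0 : ℝ) < (N : ℝ) + 1 := by positivity
      have h7 := mul_nonneg h5 h6.le
      rwa [div_mul_cancel₀ _ h6.ne'] at h7
    refine (mul_le_mul_of_nonneg_left hb0 (by positivity)).trans ?_
    have e4 : ((N : ℝ) + n + 1) / (2 * lam) * (K * E / ((N : ℝ) + 1))
        = (K * E) * ((((N : ℝ) + n + 1) / ((N : ℝ) + 1)) / (2 * lam)) := by
      field_simp
    have e5 : K * (((n : ℝ) + 1) / (2 * lam₁)) * E = (K * E) * (((n : ℝ) + 1) / (2 * lam₁)) := by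
      ring
    rw [e4, e5]
    apply mul_le_mul_of_nonneg_left _ hKE
    have hn0 : (0 : ℝ) ≤ n := by positivity
    apply div_le_div₀ (by positivity) _ (by positivity) (by linarith)
    rw [div_le_iff₀ (by positivity)]
    nlinarith [mul_nonneg hn0 hN0.le]
end
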